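/- Let d be an odd positive integer and let 𝒟 = {D₁, D₂} be nontrivial partitions of d (neither equal to [d] nor to [1,…,1]) with ν(D₁) + ν(D₂) = d − 1, ν(D₁) ≥ ν(D₂), and D₁ ≠ [2,…,2,1]. Suppose D₁ has no parts equal to 1 and D₁ contains two parts x, y with x > y. Then there exist permutations α ∈ D₁ and β ∈ D₂ of the d-element set such that the cycle type of αβ is [d−2y, y, y]; moreover there exists a permutation ω with ω² = αβ such that the group ⟨α, β, ω⟩ is transitive. -/

import Mathlib

/-- The cycle type of a permutation, including fixed points as parts equal to `1`. -/
def fullCycleType {Ω : Type*} [Fintype Ω] [DecidableEq Ω] (σ : Equiv.Perm Ω) : Multiset ℕ :=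
  σ.cycleType + Multiset.replicate (Fintype.card Ω - σ.support.card) 1

/-- A multiset of positive integers summing to `d`, i.e. a partition of `d`. -/
def IsPartitionOf (d : ℕ) (D : Multiset ℕ) : Prop :=
  (∀ x ∈ D, 0 < x) ∧ D.sum = d

/-- The defect `ν(D) = Σⱼ (dⱼ − 1)` of a partition. -/
def nu (D : Multiset ℕ) : ℕ := (D.map (· - 1)).sum

/-- The partition `[2,…,2,1]` of an odd number `d`, with `(d−1)/2` parts equal to `2`. -/
def twosAndOne (d : ℕ) : Multiset ℕ := Multiset.replicate ((d - 1) / 2) 2 + {1}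

/-- A subgroup of the symmetric group on `Ω` is transitive. -/
def SubgroupTransitive {Ω : Type*} (G : Subgroup (Equiv.Perm Ω)) : Prop :=
  ∀ x y : Ω, ∃ g ∈ G, g x = y

/-- `Λ` is a block for the subgroup `G` of the symmetric group on `Ω`. -/
def IsBlockOf {Ω : Type*} (G : Subgroup (Equiv.Perm Ω)) (Λ : Set Ω) : Prop :=
  Λ.Nonempty ∧ ∀ g ∈ G, (⇑g '' Λ = Λ ∨ Disjoint (⇑g '' Λ) Λ)

/-- A block is trivial if it is a singleton or the whole set. -/
def TrivialBlock {Ω : Type*} (Λ : Set Ω) : Prop :=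
  (∃ x, Λ = {x}) ∨ Λ = Set.univ

/-- A subgroup of the symmetric group is primitive: transitive with only trivial blocks. -/
def SubgroupPrimitive {Ω : Type*} (G : Subgroup (Equiv.Perm Ω)) : Prop :=
  SubgroupTransitive G ∧ ∀ Λ : Set Ω, IsBlockOf G Λ → TrivialBlock Λ

/-- A subgroup of the symmetric group is imprimitive: transitive but not primitive. -/
def SubgroupImprimitive {Ω : Type*} (G : Subgroup (Equiv.Perm Ω)) : Prop :=
  SubgroupTransitive G ∧ ¬ SubgroupPrimitive G

/-- The orbit of `x` under a subgroup `G` of the symmetric group on `Ω`. -/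
def orbSet {Ω : Type*} (G : Subgroup (Equiv.Perm Ω)) (x : Ω) : Set Ω :=
  {y | ∃ g ∈ G, g x = y}

/-- The number of orbits of a subgroup `G` of the symmetric group on `Ω`. -/
noncomputable def numOrbits {Ω : Type*} (G : Subgroup (Equiv.Perm Ω)) : ℕ :=
  Nat.card (Set.range (orbSet G))

/-!
Suppose that `α * β` is the disjoint sum of a cycle of odd length and of two copies of a `y`-cycle.
The odd cycle is the square of one of its powers, and the two copies have a square root exchanging
them; the group generated by `α`, `β` and that square root is then transitive as soon as `β` links
the odd cycle to one of the copies.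

To find such `α` and `β`, encode a plane bipartite tree by two permutations `σ` and `τ` of its
edges, whose cycles are the white and the black vertices; `σ * τ` is then a single cycle. Let `c` be
a `y`-cycle and `s` a transposition from an edge of the tree to a point of `c`. The permutations
`α = (σ ⊕ c ⊕ c) * s` and `β = s * (τ ⊕ 1 ⊕ 1)` have product `(σ * τ) ⊕ c ⊕ c`, and `s` only
increases by `y` and by `1` the degrees of the endpoints of the chosen edge. So one needs a tree
having an edge whose white end has degree `x - y`. Such a tree exists unless `x = y + 1`, all parts
of `D₂` are at most `2` and there are other parts in `D₁`; one of these parts is then left out of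
the tree and joined to the rest by further transpositions.
-/

section SameCycle

open Equiv Equiv.Perm

variable {α β : Type*} {σ : Perm α} {ρ : Perm β} {x y i j : α}

theorem zpow_apply_of_semiconj {f : α → β} (h : ∀ x, f (σ x) = ρ (f x)) (n : ℤ) (x : α) :
    (ρ ^ n) (f x) = f ((σ ^ n) x) := by
  induction n generalizing x with
  | zero => rfl
  | succ n ih => rw [zpow_add_one, zpow_add_one, Perm.mul_apply, Perm.mul_apply, ← h, ih]
  | pred n ih =>
    have hinv : ρ⁻¹ (f x) = f (σ⁻¹ x) := by rw [Perm.inv_eq_iff_eq, ← h]; simp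
    rw [zpow_sub_one, zpow_sub_one, Perm.mul_apply, Perm.mul_apply, hinv, ih]

theorem sameCycle_apply_of_semiconj {f : α → β} (h : ∀ x, f (σ x) = ρ (f x))
    (hxy : σ.SameCycle x y) : ρ.SameCycle (f x) (f y) := by
  obtain ⟨n, rfl⟩ := hxy
  exact ⟨n, zpow_apply_of_semiconj h n x⟩

theorem apply_eq_of_sameCycle {f : α → β} (hf : ∀ x, f (σ x) = f x) (h : σ.SameCycle x y) :
    f x = f y :=
  sameCycle_one.1 (sameCycle_apply_of_semiconj hf h)

theorem not_sameCycle_sumCongr (σ : Perm α) (ρ : Perm β) (x : α) (y : β) :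
    ¬ (σ.sumCongr ρ).SameCycle (.inl x) (.inr y) := fun h ↦
  Bool.noConfusion (apply_eq_of_sameCycle (f := Sum.isLeft) (by simp) h)

theorem sameCycle_mul_swap [Finite α] [DecidableEq α] (hij : ¬ σ.SameCycle i j) :
    (σ * swap i j).SameCycle i j := by
  have hstep (n : ℕ) : (σ * swap i j).SameCycle i ((σ ^ (n + 1)) j) := by
    have hfirst : (σ * swap i j).SameCycle i (σ j) := by
      simpa using sameCycle_apply_right.2 (SameCycle.refl (σ * swap i j) i)
    induction n with
    | zero => simpa using hfirst
    | succ n ih =>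
      rw [pow_succ', Perm.mul_apply]
      by_cases hj : (σ ^ (n + 1)) j = j
      · rwa [hj]
      · have hi : (σ ^ (n + 1)) j ≠ i := fun h ↦
          hij (h ▸ sameCycle_pow_right.2 (SameCycle.refl σ j)).symm
        simpa [swap_apply_of_ne_of_ne hi hj] using sameCycle_apply_right.2 ih
  obtain ⟨n, hn⟩ := Nat.exists_eq_add_of_le' (orderOf_pos σ)
  simpa [← hn, pow_orderOf_eq_one] using hstep n

end SameCycle

section CycleSets

open Equiv Equiv.Perm

variable {α β : Type*} [Fintype α] [DecidableEq α] [Fintype β] [DecidableEq β]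
  {σ τ : Perm α} {x y i j : α}

/-- The set of points on the cycle of `σ` through `x`; it is `{x}` when `x` is a fixed point. -/
def cycleSet (σ : Perm α) (x : α) : Finset α := {y | σ.SameCycle x y}

/-- The lengths of the cycles of `σ` meeting `s`, each cycle counted once. -/
def cycleLengths (σ : Perm α) (s : Finset α) : Multiset ℕ :=
  (s.image (cycleSet σ)).val.map Finset.card

theorem mem_cycleSet : y ∈ cycleSet σ x ↔ σ.SameCycle x y := by simp [cycleSet]

theorem self_mem_cycleSet (σ : Perm α) (x : α) : x ∈ cycleSet σ x := mem_cycleSet.2 .rfl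

theorem cycleSet_eq_iff : cycleSet σ x = cycleSet σ y ↔ σ.SameCycle x y := by
  refine ⟨fun h ↦ mem_cycleSet.1 (h ▸ self_mem_cycleSet σ y), fun h ↦ ?_⟩
  ext z
  simp only [mem_cycleSet]
  exact ⟨h.symm.trans, h.trans⟩

theorem disjoint_cycleSet (h : ¬ σ.SameCycle x y) : Disjoint (cycleSet σ x) (cycleSet σ y) :=
  Finset.disjoint_left.2 fun _ hx hy ↦
    h ((mem_cycleSet.1 hx).trans (mem_cycleSet.1 hy).symm)

theorem cycleSet_inv (σ : Perm α) (x : α) : cycleSet σ⁻¹ x = cycleSet σ x := by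
  ext
  simp [mem_cycleSet]

theorem cycleSet_eq_singleton (h : σ x = x) : cycleSet σ x = {x} := by
  ext y
  rw [mem_cycleSet, Finset.mem_singleton]
  exact ⟨fun hy ↦ (hy.eq_of_left h).symm, fun hy ↦ hy ▸ .rfl⟩

theorem cycleSet_eq_support_cycleOf (h : x ∈ σ.support) :
    cycleSet σ x = (σ.cycleOf x).support := by
  ext y
  rw [mem_cycleSet, mem_support_cycleOf_iff, and_iff_left h]

theorem cycleLengths_union {s t : Finset α} (h : ∀ x ∈ s, ∀ y ∈ t, ¬ σ.SameCycle x y) :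
    cycleLengths σ (s ∪ t) = cycleLengths σ s + cycleLengths σ t := by
  have hdisj : Disjoint (s.image (cycleSet σ)) (t.image (cycleSet σ)) := by
    simp only [Finset.disjoint_left, Finset.mem_image]
    rintro _ ⟨x, hx, rfl⟩ ⟨y, hy, hxy⟩
    exact h x hx y hy (cycleSet_eq_iff.1 hxy.symm)
  rw [cycleLengths, Finset.image_union, ← Finset.disjUnion_eq_union _ _ hdisj]
  exact Multiset.map_add _ _ _

theorem cycleLengths_cycleSet (σ : Perm α) (x : α) :
    cycleLengths σ (cycleSet σ x) = {(cycleSet σ x).card} := by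
  have himage : (cycleSet σ x).image (cycleSet σ) = {cycleSet σ x} :=
    Finset.eq_singleton_iff_unique_mem.2
      ⟨Finset.mem_image_of_mem _ (self_mem_cycleSet σ x), fun _ hs ↦ by
        obtain ⟨y, hy, rfl⟩ := Finset.mem_image.1 hs
        exact cycleSet_eq_iff.2 (mem_cycleSet.1 hy).symm⟩
  simp [cycleLengths, himage]

theorem cycleLengths_congr {s : Finset α} (h : ∀ x ∈ s, cycleSet σ x = cycleSet τ x) :
    cycleLengths σ s = cycleLengths τ s := by
  rw [cycleLengths, cycleLengths, Finset.image_congr h]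

theorem cycleLengths_support (σ : Perm α) : cycleLengths σ σ.support = σ.cycleType := by
  have himage : σ.support.image (cycleSet σ) = σ.cycleFactorsFinset.image support := by
    ext s
    simp only [Finset.mem_image]
    constructor
    · rintro ⟨x, hx, rfl⟩
      exact ⟨_, cycleOf_mem_cycleFactorsFinset_iff.2 hx, (cycleSet_eq_support_cycleOf hx).symm⟩
    · rintro ⟨c, hc, rfl⟩
      obtain ⟨x, hx⟩ := (mem_cycleFactorsFinset_iff.1 hc).1.nonempty_support
      refine ⟨x, mem_cycleFactorsFinset_support_le hc hx, ?_⟩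
      rw [cycle_is_cycleOf hx hc,
        cycleSet_eq_support_cycleOf (mem_cycleFactorsFinset_support_le hc hx)]
  have hinj : Set.InjOn support (σ.cycleFactorsFinset : Set (Perm α)) := fun c hc d hd hcd ↦ by
    obtain ⟨x, hx⟩ := (mem_cycleFactorsFinset_iff.1 hc).1.nonempty_support
    rw [cycle_is_cycleOf hx hc, cycle_is_cycleOf (hcd ▸ hx) hd]
  rw [cycleLengths, himage, Finset.image_val_of_injOn hinj, Multiset.map_map, cycleType_def]

theorem cycleLengths_compl_support (σ : Perm α) :
    cycleLengths σ σ.supportᶜ = Multiset.replicate (Fintype.card α - σ.support.card) 1 := by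
  have hfixed : Set.EqOn (cycleSet σ) singleton (σ.supportᶜ : Finset α) := fun x hx ↦
    cycleSet_eq_singleton (by simpa using hx)
  rw [cycleLengths, Finset.image_congr hfixed,
    Finset.image_val_of_injOn Finset.singleton_injective.injOn, Multiset.map_map,
    ← Finset.card_compl]
  exact Multiset.map_const' _ 1

theorem fullCycleType_eq_cycleLengths (σ : Perm α) :
    fullCycleType σ = cycleLengths σ Finset.univ := by
  rw [← Finset.union_compl σ.support, cycleLengths_union, cycleLengths_support,
    cycleLengths_compl_support, fullCycleType]
  intro x hx y hy hxy
  exact Finset.mem_compl.1 hy (hxy.mem_support_iff.1 hx)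

theorem fullCycleType_eq_add_compl {s : Finset α} (hs : ∀ x ∈ s, cycleSet σ x ⊆ s) :
    fullCycleType σ = cycleLengths σ s + cycleLengths σ sᶜ := by
  rw [fullCycleType_eq_cycleLengths, ← Finset.union_compl s, cycleLengths_union]
  intro x hx y hy hxy
  exact Finset.mem_compl.1 hy (hs x hx (mem_cycleSet.2 hxy))

theorem fullCycleType_eq_cons_cycleLengths (σ : Perm α) (x : α) :
    fullCycleType σ = (cycleSet σ x).card ::ₘ cycleLengths σ (cycleSet σ x)ᶜ := by
  rw [fullCycleType_eq_add_compl (s := cycleSet σ x), cycleLengths_cycleSet,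
    Multiset.singleton_add]
  exact fun y hy ↦ (cycleSet_eq_iff.2 (mem_cycleSet.1 hy)).ge

theorem sum_fullCycleType (σ : Perm α) : (fullCycleType σ).sum = Fintype.card α := by
  rw [fullCycleType, Multiset.sum_add, sum_cycleType, Multiset.sum_replicate, smul_eq_mul, mul_one,
    Nat.add_sub_cancel' (Finset.card_le_univ _)]

theorem fullCycleType_one : fullCycleType (1 : Perm α) = Multiset.replicate (Fintype.card α) 1 := by
  simp [fullCycleType]

theorem fullCycleType_inv (σ : Perm α) : fullCycleType σ⁻¹ = fullCycleType σ := by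
  simp [fullCycleType]

theorem fullCycleType_conj (σ τ : Perm α) : fullCycleType (τ * σ * τ⁻¹) = fullCycleType σ := by
  simp [fullCycleType]

section Semiconj

variable {ρ : Perm β} (f : α ↪ β) (h : ∀ x, f (σ x) = ρ (f x))
include h

theorem cycleSet_apply_of_semiconj (x : α) : cycleSet ρ (f x) = (cycleSet σ x).map f := by
  ext y
  rw [mem_cycleSet, Finset.mem_map]
  constructor
  · rintro ⟨n, rfl⟩
    exact ⟨(σ ^ n) x, mem_cycleSet.2 ⟨n, rfl⟩, (zpow_apply_of_semiconj h n x).symm⟩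
  · rintro ⟨z, hz, rfl⟩
    exact sameCycle_apply_of_semiconj h (mem_cycleSet.1 hz)

theorem cycleLengths_map_of_semiconj (s : Finset α) :
    cycleLengths ρ (s.map f) = cycleLengths σ s := by
  have himage : (s.map f).image (cycleSet ρ) =
      (s.image (cycleSet σ)).map (Finset.mapEmbedding f).toEmbedding := by
    rw [Finset.map_eq_image, Finset.map_eq_image, Finset.image_image, Finset.image_image]
    exact Finset.image_congr fun x _ ↦ cycleSet_apply_of_semiconj f h x
  rw [cycleLengths, himage, Finset.map_val, Multiset.map_map, cycleLengths]
  exact Multiset.map_congr rfl fun t _ ↦ Finset.card_map f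

end Semiconj

theorem fullCycleType_permCongr (e : α ≃ β) (σ : Perm α) :
    fullCycleType (e.permCongr σ) = fullCycleType σ := by
  rw [fullCycleType_eq_cycleLengths, fullCycleType_eq_cycleLengths,
    ← cycleLengths_map_of_semiconj (ρ := e.permCongr σ) e.toEmbedding (by simp),
    Finset.map_univ_equiv]

theorem card_cycleSet_sumCongr_inl (σ : Perm α) (τ : Perm β) (x : α) :
    (cycleSet (σ.sumCongr τ) (.inl x)).card = (cycleSet σ x).card :=
  (congrArg _ (cycleSet_apply_of_semiconj .inl (by simp) x)).trans (Finset.card_map _)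

theorem card_cycleSet_sumCongr_inr (σ : Perm α) (τ : Perm β) (x : β) :
    (cycleSet (σ.sumCongr τ) (.inr x)).card = (cycleSet τ x).card :=
  (congrArg _ (cycleSet_apply_of_semiconj .inr (by simp) x)).trans (Finset.card_map _)

theorem fullCycleType_sumCongr (σ : Perm α) (τ : Perm β) :
    fullCycleType (σ.sumCongr τ) = fullCycleType σ + fullCycleType τ := by
  have hsplit : (Finset.univ : Finset (α ⊕ β)) =
      Finset.univ.map .inl ∪ Finset.univ.map .inr := by
    ext (x | x) <;> simp
  rw [fullCycleType_eq_cycleLengths, hsplit, cycleLengths_union,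
    cycleLengths_map_of_semiconj (σ := σ) .inl (by simp),
    cycleLengths_map_of_semiconj (σ := τ) .inr (by simp),
    fullCycleType_eq_cycleLengths, fullCycleType_eq_cycleLengths]
  simpa using not_sameCycle_sumCongr σ τ

theorem fullCycleType_sumCongr_one (σ : Perm α) :
    fullCycleType (σ.sumCongr (1 : Perm β)) =
      fullCycleType σ + Multiset.replicate (Fintype.card β) 1 := by
  rw [fullCycleType_sumCongr, fullCycleType_one]

theorem cycleSet_subset_cycleSet_mul_swap (hij : ¬ σ.SameCycle i j) (x : α) :
    cycleSet σ x ⊆ cycleSet (σ * swap i j) x := by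
  have hswap := cycleSet_eq_iff.2 (sameCycle_mul_swap hij)
  have hinv (y : α) : cycleSet (σ * swap i j) (σ y) = cycleSet (σ * swap i j) y := by
    have happly (z : α) : cycleSet (σ * swap i j) ((σ * swap i j) z) = cycleSet (σ * swap i j) z :=
      cycleSet_eq_iff.2 (sameCycle_apply_left.2 .rfl)
    obtain rfl | hi := eq_or_ne y i
    · simpa [hswap] using happly j
    obtain rfl | hj := eq_or_ne y j
    · simpa [hswap] using happly i
    simpa [swap_apply_of_ne_of_ne hi hj] using happly y
  exact fun y hy ↦ mem_cycleSet.2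
    (cycleSet_eq_iff.1 (apply_eq_of_sameCycle hinv (mem_cycleSet.1 hy)))

theorem cycleSet_mul_swap (hij : ¬ σ.SameCycle i j) (x : α) :
    cycleSet (σ * swap i j) x =
      if x ∈ cycleSet σ i ∪ cycleSet σ j then cycleSet σ i ∪ cycleSet σ j else cycleSet σ x := by
  set τ := σ * swap i j
  set s := cycleSet σ i ∪ cycleSet σ j with hs
  have hmem (y : α) : σ y ∈ s ↔ y ∈ s := by simp [hs, mem_cycleSet]
  have hsubset : s ⊆ cycleSet τ i := by
    rw [hs, Finset.union_subset_iff]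
    exact ⟨cycleSet_subset_cycleSet_mul_swap hij i,
      (cycleSet_eq_iff.2 (sameCycle_mul_swap hij)) ▸ cycleSet_subset_cycleSet_mul_swap hij j⟩
  let f (y : α) : Finset α := if y ∈ s then s else cycleSet σ y
  have hf (y : α) : f (τ y) = f y := by
    have hi : i ∈ s := Finset.mem_union_left _ (self_mem_cycleSet σ i)
    have hj : j ∈ s := Finset.mem_union_right _ (self_mem_cycleSet σ j)
    obtain rfl | hyi := eq_or_ne y i
    · simp [f, τ, hmem, hi, hj]
    obtain rfl | hyj := eq_or_ne y j
    · simp [f, τ, hmem, hi, hj]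
    have : cycleSet σ (σ y) = cycleSet σ y := cycleSet_eq_iff.2 (sameCycle_apply_left.2 .rfl)
    simp [f, τ, hmem, swap_apply_of_ne_of_ne hyi hyj, this]
  refine Finset.Subset.antisymm (fun y hy ↦ ?_) ?_
  · change y ∈ f x
    rw [apply_eq_of_sameCycle hf (mem_cycleSet.1 hy)]
    by_cases hys : y ∈ s <;> simp [f, hys, self_mem_cycleSet]
  · split_ifs with hxs
    · rwa [cycleSet_eq_iff.2 (mem_cycleSet.1 (hsubset hxs)).symm]
    · exact cycleSet_subset_cycleSet_mul_swap hij x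

theorem card_cycleSet_mul_swap_left (hij : ¬ σ.SameCycle i j) :
    (cycleSet (σ * swap i j) i).card = (cycleSet σ i).card + (cycleSet σ j).card := by
  rw [cycleSet_mul_swap hij, if_pos (Finset.mem_union_left _ (self_mem_cycleSet σ i)),
    Finset.card_union_of_disjoint (disjoint_cycleSet hij)]

theorem fullCycleType_mul_swap (hij : ¬ σ.SameCycle i j) {R : Multiset ℕ}
    (h : fullCycleType σ = (cycleSet σ i).card ::ₘ (cycleSet σ j).card ::ₘ R) :
    fullCycleType (σ * swap i j) = ((cycleSet σ i).card + (cycleSet σ j).card) ::ₘ R := by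
  set s := cycleSet σ i ∪ cycleSet σ j with hs
  have hcompl : cycleLengths (σ * swap i j) sᶜ = cycleLengths σ sᶜ :=
    cycleLengths_congr fun x hx ↦ by
      rw [cycleSet_mul_swap hij, if_neg (Finset.mem_compl.1 hx)]
  have hσ : cycleLengths σ s = {(cycleSet σ i).card, (cycleSet σ j).card} := by
    rw [hs, cycleLengths_union, cycleLengths_cycleSet, cycleLengths_cycleSet]
    · rfl
    · intro x hx y hy hxy
      exact hij (((mem_cycleSet.1 hx).trans hxy).trans (mem_cycleSet.1 hy).symm)
  have hsplit : fullCycleType σ = cycleLengths σ s + cycleLengths σ sᶜ :=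
    fullCycleType_eq_add_compl fun x hx ↦ by
      rcases Finset.mem_union.1 hx with hx | hx
      · exact cycleSet_eq_iff.2 (mem_cycleSet.1 hx) ▸ Finset.subset_union_left
      · exact cycleSet_eq_iff.2 (mem_cycleSet.1 hx) ▸ Finset.subset_union_right
  have hR : R = cycleLengths σ sᶜ := by
    rw [h, hσ] at hsplit
    simpa using hsplit
  rw [fullCycleType_eq_cons_cycleLengths _ i, card_cycleSet_mul_swap_left hij,
    cycleSet_mul_swap hij, if_pos (Finset.mem_union_left _ (self_mem_cycleSet σ i)), hcompl, hR]

/-- The cycle of `σ` through `p` has length `a`, and the multiset `A` collects the lengths of the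
other cycles of `σ`, fixed points included. -/
def HasCycleTypeAt (σ : Perm α) (p : α) (a : ℕ) (A : Multiset ℕ) : Prop :=
  (cycleSet σ p).card = a ∧ fullCycleType σ = a ::ₘ A

namespace HasCycleTypeAt

variable {τ : Perm β} {p : α} {q : β} {a b n : ℕ} {A B : Multiset ℕ}

theorem card_eq (h : HasCycleTypeAt σ p a A) : Fintype.card α = a + A.sum := by
  rw [← sum_fullCycleType σ, h.2, Multiset.sum_cons]

theorem inv (h : HasCycleTypeAt σ p a A) : HasCycleTypeAt σ⁻¹ p a A :=
  ⟨cycleSet_inv σ p ▸ h.1, (fullCycleType_inv σ).trans h.2⟩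

theorem one (p : α) :
    HasCycleTypeAt 1 p 1 (Multiset.replicate (Fintype.card α - 1) 1) := by
  refine ⟨by rw [cycleSet_eq_singleton rfl, Finset.card_singleton], ?_⟩
  have : Nonempty α := ⟨p⟩
  rw [fullCycleType_one, ← Multiset.replicate_succ, Nat.sub_add_cancel Fintype.card_pos]

theorem of_fullCycleType_eq_singleton (h : fullCycleType σ = {n}) (p : α) :
    HasCycleTypeAt σ p n 0 := by
  have hcons := fullCycleType_eq_cons_cycleLengths σ p
  rw [h, Multiset.singleton_eq_cons_iff] at hcons
  exact ⟨hcons.1.symm, h⟩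

theorem sumCongr_inl (h : HasCycleTypeAt σ p a A) (τ : Perm β) :
    HasCycleTypeAt (σ.sumCongr τ) (.inl p) a (A + fullCycleType τ) :=
  ⟨(card_cycleSet_sumCongr_inl σ τ p).trans h.1,
    by rw [fullCycleType_sumCongr, h.2, Multiset.cons_add]⟩

theorem sumCongr_inr (h : HasCycleTypeAt τ q b B) (σ : Perm α) :
    HasCycleTypeAt (σ.sumCongr τ) (.inr q) b (fullCycleType σ + B) :=
  ⟨(card_cycleSet_sumCongr_inr σ τ q).trans h.1,
    by rw [fullCycleType_sumCongr, h.2, Multiset.add_cons]⟩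

theorem mul_swap_left (hij : ¬ σ.SameCycle i j) (hi : HasCycleTypeAt σ i a (b ::ₘ A))
    (hj : (cycleSet σ j).card = b) : HasCycleTypeAt (σ * swap i j) i (a + b) A := by
  obtain ⟨rfl, htype⟩ := hi
  subst hj
  exact ⟨card_cycleSet_mul_swap_left hij, fullCycleType_mul_swap hij htype⟩

theorem swap_mul_left (hij : ¬ σ.SameCycle i j) (hi : HasCycleTypeAt σ i a (b ::ₘ A))
    (hj : (cycleSet σ j).card = b) : HasCycleTypeAt (swap i j * σ) i (a + b) A := by
  simpa using (mul_swap_left (by simpa using hij) hi.inv (cycleSet_inv σ j ▸ hj)).inv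

theorem join_left (hσ : HasCycleTypeAt σ p a A) (hτ : HasCycleTypeAt τ q b B) :
    HasCycleTypeAt (σ.sumCongr τ * swap (.inl p) (.inr q)) (.inl p) (a + b) (A + B) := by
  refine mul_swap_left (not_sameCycle_sumCongr σ τ p q) ?_ (hτ.sumCongr_inr σ).1
  simpa [hτ.2] using hσ.sumCongr_inl τ

theorem join_right (hσ : HasCycleTypeAt σ p a A) (hτ : HasCycleTypeAt τ q b B) :
    HasCycleTypeAt (σ.sumCongr τ * swap (.inl p) (.inr q)) (.inr q) (a + b) (A + B) := by
  rw [swap_comm, add_comm a]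
  refine mul_swap_left (not_sameCycle_sumCongr σ τ p q ·.symm) ?_ (hσ.sumCongr_inl τ).1
  simpa [hσ.2] using hτ.sumCongr_inr σ

theorem swap_mul_join_left (hσ : HasCycleTypeAt σ p a A) (hτ : HasCycleTypeAt τ q b B) :
    HasCycleTypeAt (swap (.inl p) (.inr q) * σ.sumCongr τ) (.inl p) (a + b) (A + B) := by
  simpa using (hσ.inv.join_left hτ.inv).inv

end HasCycleTypeAt

theorem sameCycle_of_fullCycleType_eq_singleton {n : ℕ} (h : fullCycleType σ = {n}) (x y : α) :
    σ.SameCycle x y := by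
  have hcard : (cycleSet σ x).card = Fintype.card α := by
    rw [← sum_fullCycleType σ, h, Multiset.sum_singleton]
    exact (HasCycleTypeAt.of_fullCycleType_eq_singleton h x).1
  exact mem_cycleSet.1 (Finset.card_eq_iff_eq_univ _ |>.1 hcard ▸ Finset.mem_univ y)

theorem pow_eq_one_of_fullCycleType_eq_singleton {n : ℕ} (h : fullCycleType σ = {n}) :
    σ ^ n = 1 := by
  have hcycle : σ.IsCycleOn (Finset.univ : Finset α) :=
    ⟨by simp, fun x _ y _ ↦ sameCycle_of_fullCycleType_eq_singleton h x y⟩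
  have hn : Finset.card (Finset.univ : Finset α) = n := by
    rw [Finset.card_univ, ← sum_fullCycleType σ, h, Multiset.sum_singleton]
  exact Perm.ext fun x ↦ hn ▸ hcycle.pow_card_apply (Finset.mem_univ x)

theorem exists_fullCycleType_eq_singleton {n : ℕ} (hn : 2 ≤ n) :
    ∃ (c : Perm (Fin n)) (u : Fin n), fullCycleType c = {n} ∧ c u ≠ u := by
  have hsupport := support_finRotate_of_le hn
  refine ⟨finRotate n, ⟨0, by omega⟩, ?_, mem_support.1 (hsupport ▸ Finset.mem_univ _)⟩
  simp [fullCycleType, cycleType_finRotate_of_le hn, hsupport]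

theorem fullCycleType_swap_mul_of_apply_eq {R : Multiset ℕ} (hij : i ≠ j) (hi : σ i = i)
    (hj : σ j = j) (h : fullCycleType σ = 1 ::ₘ 1 ::ₘ R) :
    fullCycleType (swap i j * σ) = 2 ::ₘ R := by
  have hcard {k : α} (hk : σ k = k) : (cycleSet σ k).card = 1 := by
    rw [cycleSet_eq_singleton hk, Finset.card_singleton]
  exact (HasCycleTypeAt.swap_mul_left (fun hσ ↦ hij (hσ.eq_of_left hi)) ⟨hcard hi, h⟩ (hcard hj)).2

theorem fullCycleType_swap_mul_swap_mul {k l : α} {R : Multiset ℕ} (hij : i ≠ j) (hkl : k ≠ l)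
    (hi : σ i = i) (hj : σ j = j) (hk : (swap i j * σ) k = k) (hl : (swap i j * σ) l = l)
    (h : fullCycleType σ = 1 ::ₘ 1 ::ₘ 1 ::ₘ 1 ::ₘ R) :
    fullCycleType (swap k l * (swap i j * σ)) = 2 ::ₘ 2 ::ₘ R := by
  refine fullCycleType_swap_mul_of_apply_eq hkl hk hl ?_
  rw [fullCycleType_swap_mul_of_apply_eq hij hi hj h]
  simp only [Multiset.cons_swap 2 1]

omit [Fintype α] in
theorem conj_swap_mul_swap_mul {M N : Perm α} {p e f : α} (hpe : p ≠ M e) (hpf : p ≠ M f) :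
    (swap (M f) (M e) * (swap p (M f) * M) * (swap (M f) (M e))⁻¹) *
      (swap (M f) (M e) * (swap f e * N)) = swap (M e) p * (M * N) :=
  calc
    _ = swap (M f) (M e) * swap p (M f) * (M * swap f e) * N := by simp [mul_assoc]
    _ = (swap (M f) (M e) * swap p (M f) * swap (M f) (M e)) * (M * N) := by
      rw [mul_swap_eq_swap_mul M]
      simp only [mul_assoc]
    _ = swap (M e) p * (M * N) := by rw [swap_mul_swap_mul_swap hpf hpe]

end CycleSets

section Partitions

theorem nu_add_card {D : Multiset ℕ} (h : ∀ x ∈ D, 0 < x) : nu D + D.card = D.sum := by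
  have hmap : D.map (fun x ↦ x - 1 + 1) = D :=
    (Multiset.map_congr rfl fun x hx ↦ Nat.sub_add_cancel (h x hx)).trans D.map_id'
  conv_rhs => rw [← hmap, Multiset.sum_map_add]
  simp [nu]

theorem two_mul_card_le_sum {D : Multiset ℕ} (h : ∀ x ∈ D, 2 ≤ x) : 2 * D.card ≤ D.sum := by
  simpa [mul_comm] using Multiset.card_nsmul_le_sum h

theorem two_mul_card_le_sum_add_count {D : Multiset ℕ} (h : ∀ x ∈ D, 0 < x) :
    2 * D.card ≤ D.sum + D.count 1 := by
  induction D using Multiset.induction_on with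
  | empty => simp
  | cons x D ih =>
    have hx := h x (Multiset.mem_cons_self x D)
    have hD := ih fun y hy ↦ h y (Multiset.mem_cons_of_mem hy)
    rw [Multiset.card_cons, Multiset.sum_cons, Multiset.count_cons]
    split_ifs <;> omega

theorem exists_mem_one_lt_of_card_lt_sum {D : Multiset ℕ} (h : D.card < D.sum) :
    ∃ k ∈ D, 1 < k := by
  by_contra! hle
  exact h.not_ge (by simpa using Multiset.sum_le_card_nsmul D 1 hle)

theorem exists_eq_cons_add_replicate {α : Type*} [DecidableEq α] {D : Multiset α} {k x : α} {m : ℕ}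
    (hk : k ∈ D) (hkx : x ≠ k) (hm : m ≤ D.count x) :
    ∃ B, D = k ::ₘ (B + Multiset.replicate m x) := by
  obtain ⟨D, rfl⟩ := Multiset.exists_cons_of_mem hk
  rw [Multiset.count_cons_of_ne hkx, Multiset.le_count_iff_replicate_le] at hm
  obtain ⟨B, rfl⟩ := Multiset.le_iff_exists_add.1 hm
  exact ⟨B, by rw [add_comm]⟩

theorem eq_replicate_two_add_replicate_one {D : Multiset ℕ} (hpos : ∀ x ∈ D, 0 < x)
    (hle : ∀ x ∈ D, x ≤ 2) :
    D = Multiset.replicate (D.count 2) 2 + Multiset.replicate (D.count 1) 1 := by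
  rw [← Multiset.filter_eq', ← Multiset.filter_eq']
  have hfilter : D.filter (¬ · = 2) = D.filter (· = 1) :=
    Multiset.filter_congr fun x hx ↦ by have := hpos x hx; have := hle x hx; omega
  rw [← hfilter, Multiset.filter_add_not]

theorem add_replicate_of_four_le {α : Type*} {n : ℕ} (R : Multiset α) (x : α) (hn : 4 ≤ n) :
    R + Multiset.replicate n x =
      x ::ₘ x ::ₘ x ::ₘ x ::ₘ (R + Multiset.replicate (n - 4) x) := by
  obtain ⟨n, rfl⟩ := Nat.exists_eq_add_of_le' hn
  simp only [Nat.add_sub_cancel, Multiset.replicate_succ, Multiset.add_cons]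

end Partitions

section UnicellularMaps

open Equiv Equiv.Perm

variable {a b : ℕ} {A B : Multiset ℕ}

/-- There is a bipartite map with one face whose white vertices have degrees `a ::ₘ A`, whose black
vertices have degrees `b ::ₘ B`, and which has an edge `p` joining the distinguished vertices of
degrees `a` and `b`. It is encoded by two permutations of its edges, whose cycles are the white and
the black vertices respectively, and whose product is a single cycle. -/
def ExistsUnicellularMap (a : ℕ) (A : Multiset ℕ) (b : ℕ) (B : Multiset ℕ) : Prop :=
  ∃ (T : Type) (_ : Fintype T) (_ : DecidableEq T) (σ τ : Perm T) (p : T),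
    HasCycleTypeAt σ p a A ∧ HasCycleTypeAt τ p b B ∧
      fullCycleType (σ * τ) = {Fintype.card T}

namespace ExistsUnicellularMap

theorem singleEdge : ExistsUnicellularMap 1 0 1 0 :=
  ⟨Unit, inferInstance, inferInstance, 1, 1, (), .one (), .one (), by simp [fullCycleType_one]⟩

theorem symm (h : ExistsUnicellularMap a A b B) : ExistsUnicellularMap b B a A := by
  obtain ⟨T, _, _, σ, τ, p, hσ, hτ, hστ⟩ := h
  exact ⟨T, inferInstance, inferInstance, τ⁻¹, σ⁻¹, p, hτ.inv, hσ.inv, by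
    rwa [← mul_inv_rev, fullCycleType_inv]⟩

theorem exists_addLeaf (h : ExistsUnicellularMap a A b B) :
    ExistsUnicellularMap a (1 ::ₘ A) (b + 1) B ∧ ExistsUnicellularMap 1 (a ::ₘ A) (b + 1) B := by
  obtain ⟨T, _, _, σ, τ, p, hσ, hτ, hστ⟩ := h
  have hunit : HasCycleTypeAt (1 : Perm Unit) () 1 0 := .one ()
  have hprod : fullCycleType (σ.sumCongr 1 * (τ.sumCongr 1 * swap (.inl p) (.inr ()))) =
      {Fintype.card (T ⊕ Unit)} := by
    rw [← mul_assoc, Perm.sumCongr_mul, mul_one, Fintype.card_sum]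
    exact ((HasCycleTypeAt.of_fullCycleType_eq_singleton hστ p).join_left hunit).2
  constructor
  · refine ⟨T ⊕ Unit, inferInstance, inferInstance, _, _, .inl p, ?_, ?_, hprod⟩
    · simpa [hunit.2, ← Multiset.singleton_add, add_comm] using hσ.sumCongr_inl (1 : Perm Unit)
    · simpa using hτ.join_left hunit
  · refine ⟨T ⊕ Unit, inferInstance, inferInstance, _, _, .inr (), ?_, ?_, hprod⟩
    · simpa [hσ.2] using hunit.sumCongr_inr σ
    · simpa using hτ.join_right hunit

end ExistsUnicellularMap

/-- The numerical conditions satisfied by the degrees of a plane bipartite tree with white vertices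
`a ::ₘ A`, black vertices `b ::ₘ B` and an edge joining the vertices of degrees `a` and `b`. -/
structure IsTreeType (a : ℕ) (A : Multiset ℕ) (b : ℕ) (B : Multiset ℕ) : Prop where
  pos_left : ∀ x ∈ a ::ₘ A, 0 < x
  pos_right : ∀ x ∈ b ::ₘ B, 0 < x
  sum_eq : a + A.sum = b + B.sum
  card_eq : A.card + B.card + 1 = a + A.sum
  not_isolated : 1 < a ∨ 1 < b ∨ a + A.sum = 1

namespace IsTreeType

theorem symm (h : IsTreeType a A b B) : IsTreeType b B a A where
  pos_left := h.pos_right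
  pos_right := h.pos_left
  sum_eq := h.sum_eq.symm
  card_eq := by rw [add_comm B.card, h.card_eq, h.sum_eq]
  not_isolated := h.sum_eq ▸ or_left_comm.1 h.not_isolated

theorem exists_removeLeaf (h : IsTreeType a A b B) (ha : 1 < a) (hb : 1 < b) (hA : 1 ∈ A) :
    ∃ A' b', A = 1 ::ₘ A' ∧ b = b' + 1 ∧ IsTreeType a A' b' B := by
  obtain ⟨A, rfl⟩ := Multiset.exists_cons_of_mem hA
  obtain ⟨b, rfl⟩ := Nat.exists_eq_add_of_le' hb.le
  have hsum := h.sum_eq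
  have hcard := h.card_eq
  have hleft := h.pos_left
  have hright := h.pos_right
  simp only [Multiset.sum_cons, Multiset.card_cons, Multiset.mem_cons, forall_eq_or_imp]
    at hsum hcard hleft hright
  exact ⟨A, b, rfl, rfl,
    { pos_left := by simpa using ⟨hleft.1, hleft.2.2⟩
      pos_right := by simpa using ⟨by omega, hright.2⟩
      sum_eq := by omega
      card_eq := by omega
      not_isolated := .inl ha }⟩

theorem exists_removeLeaf_one (h : IsTreeType 1 A b B) (hb : 1 < b) :
    ∃ a' A' b', A = a' ::ₘ A' ∧ b = b' + 1 ∧ IsTreeType a' A' b' B := by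
  obtain ⟨b, rfl⟩ := Nat.exists_eq_add_of_le' hb.le
  have hsum := h.sum_eq
  have hcard := h.card_eq
  have hleft := h.pos_left
  have hright := h.pos_right
  obtain ⟨a, haA, ha⟩ : ∃ a ∈ A, 1 < a ∨ 1 < b ∨ A.sum = 1 := by
    by_cases hbig : ∃ a ∈ A, 1 < a
    · exact hbig.imp fun a ha ↦ ⟨ha.1, .inl ha.2⟩
    have hA : A.sum ≤ A.card := by
      simpa using Multiset.sum_le_card_nsmul A 1 (by simpa using hbig)
    obtain rfl : B = 0 := Multiset.card_eq_zero.1 (by omega)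
    obtain ⟨a, haA⟩ : ∃ a, a ∈ A := Multiset.card_pos_iff_exists_mem.1 (by simp at hsum; omega)
    exact ⟨a, haA, by simp at hsum; omega⟩
  obtain ⟨A, rfl⟩ := Multiset.exists_cons_of_mem haA
  simp only [Multiset.sum_cons, Multiset.card_cons, Multiset.mem_cons, forall_eq_or_imp]
    at hsum hcard hleft hright ha
  exact ⟨a, A, b, rfl, rfl,
    { pos_left := by simpa using hleft.2
      pos_right := by simpa using ⟨by omega, hright.2⟩
      sum_eq := by omega
      card_eq := by omega
      not_isolated := ha }⟩

theorem one_mem (h : IsTreeType a A b B) (ha : 1 < a) (hb : 1 < b) : 1 ∈ A ∨ 1 ∈ B := by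
  have hcountA := two_mul_card_le_sum_add_count h.pos_left
  have hcountB := two_mul_card_le_sum_add_count h.pos_right
  have hsum := h.sum_eq
  have hcard := h.card_eq
  simp only [Multiset.card_cons, Multiset.sum_cons, Multiset.count_cons_of_ne ha.ne,
    Multiset.count_cons_of_ne hb.ne] at hcountA hcountB
  simp only [← Multiset.one_le_count_iff_mem]
  omega

/-- Induct by removing a leaf attached to an endpoint of the distinguished edge. -/
theorem existsUnicellularMap (h : IsTreeType a A b B) : ExistsUnicellularMap a A b B := by
  induction hn : a + A.sum using Nat.strong_induction_on generalizing a b A B with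
  | _ n ih =>
  have of_left_eq_one {A : Multiset ℕ} {b : ℕ} {B : Multiset ℕ} (h : IsTreeType 1 A b B)
      (hb : 1 < b) (hn : 1 + A.sum = n) : ExistsUnicellularMap 1 A b B := by
    obtain ⟨a, A, b, rfl, rfl, h'⟩ := h.exists_removeLeaf_one hb
    rw [Multiset.sum_cons] at hn
    exact (ih _ (by omega) h' rfl).exists_addLeaf.2
  have of_one_mem {a : ℕ} {A : Multiset ℕ} {b : ℕ} {B : Multiset ℕ} (h : IsTreeType a A b B)
      (ha : 1 < a) (hb : 1 < b) (hA : 1 ∈ A) (hn : a + A.sum = n) :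
      ExistsUnicellularMap a A b B := by
    obtain ⟨A, b, rfl, rfl, h'⟩ := h.exists_removeLeaf ha hb hA
    rw [Multiset.sum_cons] at hn
    exact (ih _ (by omega) h' rfl).exists_addLeaf.1
  have hn' : b + B.sum = n := h.sum_eq ▸ hn
  obtain rfl | ha := (Nat.succ_le_of_lt (h.pos_left a (by simp))).eq_or_lt'
  · obtain rfl | hb := (Nat.succ_le_of_lt (h.pos_right b (by simp))).eq_or_lt'
    · have hsum := h.not_isolated
      have hcard := h.card_eq
      obtain rfl : A = 0 := Multiset.card_eq_zero.1 (by omega)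
      obtain rfl : B = 0 := Multiset.card_eq_zero.1 (by omega)
      exact .singleEdge
    · exact of_left_eq_one h hb hn
  · obtain rfl | hb := (Nat.succ_le_of_lt (h.pos_right b (by simp))).eq_or_lt'
    · exact (of_left_eq_one h.symm ha hn').symm
    · rcases h.one_mem ha hb with hA | hB
      · exact of_one_mem h ha hb hA hn
      · exact (of_one_mem h.symm hb ha hB hn').symm

end IsTreeType

theorem exists_isTreeType_one {A : Multiset ℕ} (hA : ∀ x ∈ A, 2 ≤ x) :
    ∃ b B, IsTreeType 1 A b B ∧ b ::ₘ B =
      Multiset.replicate A.card 2 + Multiset.replicate (1 + A.sum - 2 * A.card) 1 := by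
  have hcard := two_mul_card_le_sum hA
  obtain rfl | hne := eq_or_ne A 0
  · exact ⟨1, 0, by constructor <;> simp, by simp⟩
  obtain ⟨n, hn⟩ := Nat.exists_eq_add_of_le' (Multiset.card_pos.2 hne)
  let B := Multiset.replicate n 2 + Multiset.replicate (1 + A.sum - 2 * A.card) 1
  have hB : 2 ::ₘ B =
      Multiset.replicate A.card 2 + Multiset.replicate (1 + A.sum - 2 * A.card) 1 := by
    simp only [B, hn, Multiset.replicate_succ, Multiset.cons_add]
  refine ⟨2, B, ?_, hB⟩
  exact
    { pos_left := by simpa using fun x hx ↦ zero_lt_two.trans_le (hA x hx)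
      pos_right := by
        rw [hB]
        intro x hx
        rcases Multiset.mem_add.1 hx with hx | hx <;> simp [Multiset.eq_of_mem_replicate hx]
      sum_eq := by simp [B]; omega
      card_eq := by simp [B]; omega
      not_isolated := .inr (.inl one_lt_two) }

end UnicellularMaps

section Orbits

open Equiv

variable {T : Type*} {G : Subgroup (Perm T)} {x y z : T}

theorem mem_orbSet_of_sameCycle {g : Perm T} (hg : g ∈ G)
    (h : g.SameCycle x y) : y ∈ orbSet G x :=
  let ⟨n, hn⟩ := h
  ⟨g ^ n, G.zpow_mem hg n, hn⟩

theorem mem_orbSet_trans (hxy : y ∈ orbSet G x)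
    (hyz : z ∈ orbSet G y) : z ∈ orbSet G x := by
  obtain ⟨g, hg, rfl⟩ := hxy
  obtain ⟨h, hh, rfl⟩ := hyz
  exact ⟨h * g, G.mul_mem hh hg, rfl⟩

theorem subgroupTransitive_of_forall_mem_orbSet {x₀ : T} (h : ∀ x, x₀ ∈ orbSet G x) :
    SubgroupTransitive G := by
  intro x y
  obtain ⟨g, hg, hgx⟩ := h x
  obtain ⟨k, hk, hky⟩ := h y
  exact ⟨k⁻¹ * g, G.mul_mem (G.inv_mem hk) hg, by simp [hgx, ← hky]⟩

end Orbits

section SquareRoots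

open Equiv

variable {U : Type*}

/-- The square root of the permutation `c.sumCongr c` which exchanges the two copies of `U`. -/
def sqrtSumCongrSelf (c : Perm U) : Perm (U ⊕ U) := Equiv.sumComm U U * c.sumCongr 1

theorem sqrtSumCongrSelf_sq (c : Perm U) : sqrtSumCongrSelf c ^ 2 = c.sumCongr c := by
  ext (u | u) <;> simp [sqrtSumCongrSelf, sq]

end SquareRoots

section Realizability

open Equiv

variable {Ω T U : Type*} [Fintype Ω] [DecidableEq Ω] [Fintype T] [DecidableEq T]
  [Fintype U] [DecidableEq U] {D₁ D₂ D₃ : Multiset ℕ}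

/-- Some permutations `α` and `β` of `Ω` have cycle types `D₁` and `D₂`, and their product has
cycle type `D₃` and a square root `ω` such that `⟨α, β, ω⟩` is transitive. -/
def IsRealizable (Ω : Type*) [Fintype Ω] [DecidableEq Ω] (D₁ D₂ D₃ : Multiset ℕ) : Prop :=
  ∃ α β : Perm Ω, fullCycleType α = D₁ ∧ fullCycleType β = D₂ ∧ fullCycleType (α * β) = D₃ ∧
    ∃ ω : Perm Ω, ω ^ 2 = α * β ∧ SubgroupTransitive (Subgroup.closure {α, β, ω})

theorem IsRealizable.of_card_eq (h : IsRealizable T D₁ D₂ D₃)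
    (hcard : Fintype.card T = Fintype.card Ω) : IsRealizable Ω D₁ D₂ D₃ := by
  obtain ⟨α, β, hα, hβ, hαβ, ω, hω, htrans⟩ := h
  let e := Fintype.equivOfCardEq hcard
  let φ : Perm T →* Perm Ω := e.permCongrHom.toMonoidHom
  have hφ (σ : Perm T) : fullCycleType (φ σ) = fullCycleType σ := fullCycleType_permCongr e σ
  refine ⟨φ α, φ β, (hφ α).trans hα, (hφ β).trans hβ, ?_, φ ω, ?_, fun x y ↦ ?_⟩
  · rw [← map_mul, hφ, hαβ]
  · rw [← map_pow, hω, map_mul]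
  · obtain ⟨g, hg, hgx⟩ := htrans (e.symm x) (e.symm y)
    refine ⟨φ g, ?_, ?_⟩
    · have := Subgroup.mem_map_of_mem φ hg
      rwa [MonoidHom.map_closure, Set.image_insert_eq, Set.image_insert_eq,
        Set.image_singleton] at this
    · change e (g (e.symm x)) = y
      rw [hgx, e.apply_symm_apply]

theorem isRealizable_of_mul_eq_sumCongr {α β : Perm (T ⊕ (U ⊕ U))} {γ : Perm T} {c : Perm U}
    {n y : ℕ} (hodd : Odd n) (hγ : fullCycleType γ = {n}) (hc : fullCycleType c = {y})
    (hmul : α * β = γ.sumCongr (c.sumCongr c)) {s : T} {u : U}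
    (hlink : β (.inl s) = .inr (.inl u)) :
    IsRealizable (T ⊕ (U ⊕ U)) (fullCycleType α) (fullCycleType β) {n, y, y} := by
  obtain ⟨k, rfl⟩ := hodd
  let ω : Perm (T ⊕ (U ⊕ U)) := (γ ^ (k + 1)).sumCongr (sqrtSumCongrSelf c)
  have hω : ω ^ 2 = α * β := by
    have hγpow : (γ ^ (k + 1)) ^ 2 = γ := by
      rw [← pow_mul, show (k + 1) * 2 = 2 * k + 1 + 1 by ring, pow_succ,
        pow_eq_one_of_fullCycleType_eq_singleton hγ, one_mul]
    rw [hmul, sq, Perm.sumCongr_mul, ← sq, ← sq, sqrtSumCongrSelf_sq, hγpow]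
  refine ⟨α, β, rfl, rfl, ?_, ω, hω,
    subgroupTransitive_of_forall_mem_orbSet (x₀ := .inr (.inl u)) ?_⟩
  · rw [hmul, fullCycleType_sumCongr, fullCycleType_sumCongr, hγ, hc]
    rfl
  set G := Subgroup.closure {α, β, ω}
  have hβG : β ∈ G := Subgroup.subset_closure (by simp)
  have hωG : ω ∈ G := Subgroup.subset_closure (by simp)
  have hprodG : α * β ∈ G := G.mul_mem (Subgroup.subset_closure (by simp)) hβG
  have hT (t : T) : .inl s ∈ orbSet G (.inl t) :=
    mem_orbSet_of_sameCycle hprodG <| sameCycle_apply_of_semiconj (f := Sum.inl) (by simp [hmul])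
      (sameCycle_of_fullCycleType_eq_singleton hγ t s)
  have hU (v : U) : .inr (.inl u) ∈ orbSet G (.inr (.inl v)) :=
    mem_orbSet_of_sameCycle hprodG <|
      sameCycle_apply_of_semiconj (f := Sum.inr ∘ Sum.inl) (by simp [hmul])
        (sameCycle_of_fullCycleType_eq_singleton hc v u)
  rintro (t | v | v)
  · exact mem_orbSet_trans (hT t) ⟨β, hβG, hlink⟩
  · exact hU v
  · exact mem_orbSet_trans ⟨ω, hωG, by simp [ω, sqrtSumCongrSelf]⟩ (hU v)

variable {a b k y z : ℕ} {A B D : Multiset ℕ}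

theorem isRealizable_of_existsUnicellularMap (h : ExistsUnicellularMap a A b B)
    (hodd : Odd (a + A.sum)) (hy : 2 ≤ y) (hΩ : Fintype.card Ω = a + A.sum + 2 * y) :
    IsRealizable Ω ((a + y) ::ₘ y ::ₘ A) ((b + 1) ::ₘ (B + Multiset.replicate (2 * y - 1) 1))
      {a + A.sum, y, y} := by
  obtain ⟨T, _, _, σ, τ, p, hσ, hτ, hστ⟩ := h
  have hT := hσ.card_eq
  obtain ⟨c, u, hc, -⟩ := exists_fullCycleType_eq_singleton hy
  have hu : HasCycleTypeAt (c.sumCongr c) (.inl u) y {y} := by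
    have h := (HasCycleTypeAt.of_fullCycleType_eq_singleton hc u).sumCongr_inl c
    rwa [hc, zero_add] at h
  let s : Perm (T ⊕ (Fin y ⊕ Fin y)) := swap (.inl p) (.inr (.inl u))
  let α : Perm (T ⊕ (Fin y ⊕ Fin y)) := σ.sumCongr (c.sumCongr c) * s
  let β : Perm (T ⊕ (Fin y ⊕ Fin y)) := s * τ.sumCongr 1
  have hα : fullCycleType α = (a + y) ::ₘ y ::ₘ A := by
    have h := (hσ.join_left hu).2
    rw [add_comm A, Multiset.singleton_add] at h
    exact h
  have hβ : fullCycleType β = (b + 1) ::ₘ (B + Multiset.replicate (2 * y - 1) 1) := by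
    have h := (hτ.swap_mul_join_left (HasCycleTypeAt.one (α := Fin y ⊕ Fin y) (.inl u))).2
    rwa [Fintype.card_sum, Fintype.card_fin, ← two_mul] at h
  have hmul : α * β = (σ * τ).sumCongr (c.sumCongr c) := by
    rw [mul_assoc, swap_mul_self_mul, Perm.sumCongr_mul, mul_one]
  have hlink : β (.inl (τ⁻¹ p)) = .inr (.inl u) := by simp [β, s]
  rw [← hα, ← hβ]
  exact (isRealizable_of_mul_eq_sumCongr hodd (hT ▸ hστ) hc hmul hlink).of_card_eq
    (by simp [hT, hΩ, two_mul])

theorem isRealizable_of_existsUnicellularMap_one (h : ExistsUnicellularMap 1 A b B)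
    (hodd : Odd (1 + A.sum + z)) (hy : 2 ≤ y) (hz : 2 ≤ z)
    (hΩ : Fintype.card Ω = 1 + A.sum + z + 2 * y) :
    IsRealizable Ω ((y + 1) ::ₘ y ::ₘ z ::ₘ A)
      (2 ::ₘ 2 ::ₘ b ::ₘ (B + Multiset.replicate (2 * y + z - 4) 1)) {1 + A.sum + z, y, y} := by
  obtain ⟨T, _, _, σ, τ, p, hσ, hτ, hστ⟩ := h
  have hT := hσ.card_eq
  obtain ⟨c, u, hc, hu⟩ := exists_fullCycleType_eq_singleton hy
  obtain ⟨w, v, hw, hv⟩ := exists_fullCycleType_eq_singleton hz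
  let M : Perm ((T ⊕ Fin z) ⊕ (Fin y ⊕ Fin y)) := (σ.sumCongr w).sumCongr (c.sumCongr c)
  let N : Perm ((T ⊕ Fin z) ⊕ (Fin y ⊕ Fin y)) := (τ.sumCongr 1).sumCongr 1
  let e : (T ⊕ Fin z) ⊕ (Fin y ⊕ Fin y) := .inl (.inr v)
  let f : (T ⊕ Fin z) ⊕ (Fin y ⊕ Fin y) := .inr (.inl u)
  let γ : Perm (T ⊕ Fin z) := swap (.inr (w v)) (.inl p) * (σ * τ).sumCongr w
  -- The transpositions cancel in `α * β`, up to one which joins the cycles of `σ * τ` and `w`.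
  let α := swap (M f) (M e) * (swap (.inl (.inl p)) (M f) * M) * (swap (M f) (M e))⁻¹
  let β := swap (M f) (M e) * (swap f e * N)
  have hα : fullCycleType α = (y + 1) ::ₘ y ::ₘ z ::ₘ A := by
    have hcu := (HasCycleTypeAt.of_fullCycleType_eq_singleton hc (c u)).sumCongr_inl c
    have h := ((hσ.sumCongr_inl w).swap_mul_join_left hcu).2
    rw [hc, hw, zero_add] at h
    rw [fullCycleType_conj]
    refine h.trans ?_
    simp only [← Multiset.singleton_add, add_comm, add_left_comm]
  have hβ : fullCycleType β = 2 ::ₘ 2 ::ₘ b ::ₘ (B + Multiset.replicate (2 * y + z - 4) 1) := by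
    have hN : fullCycleType N = b ::ₘ (B + Multiset.replicate (2 * y + z) 1) := by
      simp only [N, fullCycleType_sumCongr_one, hτ.2, Multiset.cons_add, add_assoc,
        ← Multiset.replicate_add, Fintype.card_sum, Fintype.card_fin, two_mul, add_comm z]
    rw [← Multiset.cons_add, add_replicate_of_four_le _ _ (by omega), Multiset.cons_add] at hN
    refine fullCycleType_swap_mul_swap_mul (by simp [e, f]) (by simp [M, e, f])
      (by simp [N, f]) (by simp [N, e]) ?_ ?_ hN
    · simp [M, N, e, f, hu, swap_apply_def]
    · simp [M, N, e, f, hv, swap_apply_def]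
  have hγ : fullCycleType γ = {1 + A.sum + z} := by
    have h := ((HasCycleTypeAt.of_fullCycleType_eq_singleton (hT ▸ hστ) p).swap_mul_join_left
      (HasCycleTypeAt.of_fullCycleType_eq_singleton hw (w v))).2
    rwa [swap_comm, zero_add] at h
  have hmul : α * β = γ.sumCongr (c.sumCongr c) := by
    rw [conj_swap_mul_swap_mul (by simp [M, e]) (by simp [M, f])]
    simp only [M, N, γ, Perm.sumCongr_mul, mul_one]
    rw [← one_mul (c.sumCongr c), ← Perm.sumCongr_mul, Perm.sumCongr_swap_one, one_mul]
    rfl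
  have hlink : β (.inl (.inr v)) = .inr (.inl u) := by
    simp [β, N, M, e, f, hu.symm, swap_apply_def]
  rw [← hα, ← hβ]
  exact (isRealizable_of_mul_eq_sumCongr hodd hγ hc hmul hlink).of_card_eq
    (by simp [hT, hΩ, two_mul])

theorem isRealizable_of_mem (hA : ∀ x ∈ a ::ₘ A, 0 < x) (hD : ∀ x ∈ D, 0 < x) (hk : k ∈ D)
    (hk1 : 1 < k) (hak : 1 < a ∨ 2 < k ∨ a + A.sum = 1) (hones : 2 * y - 1 ≤ D.count 1)
    (hy : 2 ≤ y) (hodd : Odd (a + A.sum)) (hsum : D.sum = a + A.sum + 2 * y)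
    (hcard : A.card + D.card + 1 = D.sum) (hΩ : Fintype.card Ω = D.sum) :
    IsRealizable Ω ((a + y) ::ₘ y ::ₘ A) D {a + A.sum, y, y} := by
  obtain ⟨B, rfl⟩ := exists_eq_cons_add_replicate hk hk1.ne hones
  obtain ⟨b, rfl⟩ := Nat.exists_eq_add_of_le' hk1.le
  simp only [Multiset.sum_cons, Multiset.sum_add, Multiset.sum_replicate, Multiset.card_cons,
    Multiset.card_add, Multiset.card_replicate, smul_eq_mul, mul_one] at hsum hcard hΩ
  refine isRealizable_of_existsUnicellularMap (IsTreeType.existsUnicellularMap ?_) hodd hy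
    (by omega)
  exact
    { pos_left := hA
      pos_right := by
        intro x hx
        rcases Multiset.mem_cons.1 hx with rfl | hx
        · omega
        · exact hD x (by simp [hx])
      sum_eq := by omega
      card_eq := by omega
      not_isolated := by omega }

theorem isRealizable_of_forall_le_two (hA : ∀ x ∈ A, 2 ≤ x) (hy : 2 ≤ y) (hz : 2 ≤ z)
    (hpos : ∀ x ∈ D, 0 < x) (hle : ∀ x ∈ D, x ≤ 2) (hodd : Odd (1 + A.sum + z))
    (hsum : D.sum = 1 + A.sum + z + 2 * y) (hcard : A.card + D.card + 2 = D.sum)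
    (hΩ : Fintype.card Ω = D.sum) :
    IsRealizable Ω ((y + 1) ::ₘ y ::ₘ z ::ₘ A) D {1 + A.sum + z, y, y} := by
  obtain ⟨b, B, hbB, hB⟩ := exists_isTreeType_one hA
  have hAcard := two_mul_card_le_sum hA
  have hD : D = 2 ::ₘ 2 ::ₘ b ::ₘ (B + Multiset.replicate (2 * y + z - 4) 1) := by
    have hcounts := eq_replicate_two_add_replicate_one hpos hle
    have hDsum := congrArg Multiset.sum hcounts
    have hDcard := congrArg Multiset.card hcounts
    simp only [Multiset.sum_add, Multiset.sum_replicate, Multiset.card_add,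
      Multiset.card_replicate, smul_eq_mul, mul_one] at hDsum hDcard
    have htwos : D.count 2 = A.card + 2 := by omega
    have hones : D.count 1 = 1 + A.sum - 2 * A.card + (2 * y + z - 4) := by omega
    rw [hcounts, htwos, hones, ← Multiset.cons_add, hB, Multiset.replicate_succ,
      Multiset.replicate_succ, Multiset.replicate_add, Multiset.cons_add, Multiset.cons_add,
      add_assoc]
  rw [hD]
  exact isRealizable_of_existsUnicellularMap_one hbB.existsUnicellularMap hodd hy hz (by omega)

theorem isRealizable_cons_cons (ha : 0 < a) (hA : ∀ x ∈ A, 2 ≤ x) (hy : 2 ≤ y)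
    (hD : ∀ x ∈ D, 0 < x) (hodd : Odd (a + A.sum)) (hsum : D.sum = a + A.sum + 2 * y)
    (hcard : A.card + D.card + 1 = D.sum) (hΩ : Fintype.card Ω = D.sum) :
    IsRealizable Ω ((a + y) ::ₘ y ::ₘ A) D {a + A.sum, y, y} := by
  by_cases hcase : ∃ k ∈ D, 1 < k ∧ (1 < a ∨ 2 < k ∨ a + A.sum = 1)
  · obtain ⟨k, hk, hk1, hak⟩ := hcase
    have hpos : ∀ x ∈ a ::ₘ A, 0 < x := by
      simpa using ⟨ha, fun x hx ↦ zero_lt_two.trans_le (hA x hx)⟩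
    have hones : 2 * y - 1 ≤ D.count 1 := by
      have hAcard := two_mul_card_le_sum hA
      have hDcard := two_mul_card_le_sum_add_count hD
      omega
    exact isRealizable_of_mem hpos hD hk hk1 hak hones hy hodd hsum hcard hΩ
  · push Not at hcase
    obtain ⟨k, hk, hk1⟩ := exists_mem_one_lt_of_card_lt_sum (D := D) (by omega)
    obtain ⟨ha1, -, hA1⟩ := hcase k hk hk1
    have hle : ∀ x ∈ D, x ≤ 2 := fun x hx ↦ by
      by_contra! hx2
      exact hx2.not_ge (hcase x hx (by omega)).2.1
    obtain rfl : a = 1 := by omega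
    obtain ⟨z, hz⟩ : ∃ z, z ∈ A :=
      Multiset.exists_mem_of_ne_zero (by rintro rfl; simp at hA1)
    obtain ⟨A, rfl⟩ := Multiset.exists_cons_of_mem hz
    simp only [Multiset.sum_cons, Multiset.card_cons, Multiset.mem_cons, forall_eq_or_imp,
      add_comm z, ← add_assoc] at hA hodd hsum hcard ⊢
    rw [add_comm 1 y]
    exact isRealizable_of_forall_le_two hA.2 hy hA.1 hD hle hodd hsum (by omega) hΩ

end Realizability

/-- If `D₁` has no parts equal to 1 and contains parts `x > y`, then there are
`α ∈ D₁`, `β ∈ D₂` with `αβ` of cycle type `[d−2y, y, y]`, and an `ω` with `ω² = αβ` such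
that `⟨α, β, ω⟩` is transitive. -/
theorem statement_4 {Ω : Type*} [Fintype Ω] [DecidableEq Ω] (d : ℕ)
    (hcard : Fintype.card Ω = d) (hd : Odd d) (hdpos : 0 < d)
    (D₁ D₂ : Multiset ℕ) (hP1 : IsPartitionOf d D₁) (hP2 : IsPartitionOf d D₂)
    (hnt1 : D₁ ≠ {d} ∧ D₁ ≠ Multiset.replicate d 1)
    (hnt2 : D₂ ≠ {d} ∧ D₂ ≠ Multiset.replicate d 1)
    (hsum : nu D₁ + nu D₂ = d - 1) (hord : nu D₂ ≤ nu D₁)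
    (hne : D₁ ≠ twosAndOne d)
    (hno1 : (1 : ℕ) ∉ D₁)
    (x y : ℕ) (hx : x ∈ D₁) (hy : y ∈ D₁) (hxy : y < x) :
    ∃ α β : Equiv.Perm Ω, fullCycleType α = D₁ ∧ fullCycleType β = D₂ ∧
      fullCycleType (α * β) = ({d - 2 * y, y, y} : Multiset ℕ) ∧
      ∃ ω : Equiv.Perm Ω, ω ^ 2 = α * β ∧
        SubgroupTransitive (Subgroup.closure {α, β, ω}) := by
  have hD₁ : ∀ z ∈ D₁, 2 ≤ z := fun z hz ↦
    Nat.lt_of_le_of_ne (hP1.1 z hz) fun h ↦ hno1 (h ▸ hz)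
  have hy2 : 2 ≤ y := hD₁ y hy
  have hcard₁ := nu_add_card hP1.1
  have hcard₂ := nu_add_card hP2.1
  have hsum₁ := hP1.2
  have hsum₂ := hP2.2
  obtain ⟨E, rfl⟩ := Multiset.exists_cons_of_mem hx
  obtain ⟨A, rfl⟩ := Multiset.exists_cons_of_mem ((Multiset.mem_cons.1 hy).resolve_left hxy.ne)
  obtain ⟨a, rfl⟩ := Nat.exists_eq_add_of_le' hxy.le
  simp only [Multiset.sum_cons, Multiset.card_cons] at hcard₁ hsum₁
  have hd' : d = a + A.sum + 2 * y := by omega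
  rw [hd', Nat.add_sub_cancel]
  have hodd : Odd (a + A.sum) := by
    rw [hd', Nat.odd_add] at hd
    exact hd.2 (even_two_mul y)
  exact isRealizable_cons_cons (by omega) (fun z hz ↦ hD₁ z (by simp [hz])) hy2 hP2.1 hodd
    (by omega) (by omega) (by omega)
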